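/- Let F₁, F₂ be two facets of K₁ that do not intersect (i.e., F₁ ∩ F₂ = ∅), and let c₁, c₂ be their centres. If c₁, c₂ ∈ λK₁ + u for some λ > 0 and u ∈ ℝ³, then λ ≥ 1. -/

import Mathlib

open Pointwise

/-- The unit cross-polytope in ℝ³. -/
def K1 : Set (Fin 3 → ℝ) := {x | |x 0| + |x 1| + |x 2| ≤ 1}

/-- The facet of `K1` determined by a sign vector `e` (each `e i` being `1` or `-1`). -/
def K1Facet (e : Fin 3 → ℝ) : Set (Fin 3 → ℝ) :=
  convexHull ℝ {![e 0, 0, 0], ![0, e 1, 0], ![0, 0, e 2]}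

/-- The centre (centroid) of the facet determined by the sign vector `e`. -/
noncomputable def K1FacetCentre (e : Fin 3 → ℝ) : Fin 3 → ℝ :=
  (1 / 3 : ℝ) • (![e 0, 0, 0] + ![0, e 1, 0] + ![0, 0, e 2])

/-- Disjoint facets have opposite sign vectors. -/
theorem eq_neg_of_disjoint_K1Facet {e₁ e₂ : Fin 3 → ℝ}
    (he₁ : ∀ i, e₁ i = 1 ∨ e₁ i = -1) (he₂ : ∀ i, e₂ i = 1 ∨ e₂ i = -1)
    (hint : K1Facet e₁ ∩ K1Facet e₂ = ∅) (i : Fin 3) : e₂ i = -e₁ i := by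
  have hne : e₁ i ≠ e₂ i := by
    intro h
    have hmem (e : Fin 3 → ℝ) : Pi.single i (e i) ∈ K1Facet e := by
      apply subset_convexHull
      fin_cases i
      · left; ext j; fin_cases j <;> simp
      · right; left; ext j; fin_cases j <;> simp
      · right; right; ext j; fin_cases j <;> simp
    exact Set.eq_empty_iff_forall_notMem.mp hint _ ⟨hmem e₁, h ▸ hmem e₂⟩
  rcases he₁ i with h₁ | h₁ <;> rcases he₂ i with h₂ | h₂ <;> simp_all

theorem K1FacetCentre_apply (e : Fin 3 → ℝ) (i : Fin 3) : K1FacetCentre e i = e i / 3 := by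
  fin_cases i <;> simp [K1FacetCentre] <;> ring

/-- A linear functional with coefficients of absolute value one is at most `1` on `K1`
in absolute value. -/
theorem abs_sum_mul_le_one_of_mem_K1 {e x : Fin 3 → ℝ} (he : ∀ i, |e i| = 1) (hx : x ∈ K1) :
    |∑ i, e i * x i| ≤ 1 :=
  calc |∑ i, e i * x i| ≤ ∑ i, |e i * x i| := Finset.abs_sum_le_sum_abs _ _
    _ = |x 0| + |x 1| + |x 2| := by simp [abs_mul, he, Fin.sum_univ_three]
    _ ≤ 1 := hx

/-- If `λ • K1 + u` contains the centres of two disjoint facets of `K1`, then `λ ≥ 1`. -/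
theorem ratio_ge_one_of_two_opposite_centres
    (e₁ e₂ : Fin 3 → ℝ)
    (he₁ : ∀ i, e₁ i = 1 ∨ e₁ i = -1) (he₂ : ∀ i, e₂ i = 1 ∨ e₂ i = -1)
    (hint : K1Facet e₁ ∩ K1Facet e₂ = ∅)
    (lam : ℝ) (hlam : 0 < lam) (u : Fin 3 → ℝ)
    (hc₁ : K1FacetCentre e₁ ∈ u +ᵥ lam • K1)
    (hc₂ : K1FacetCentre e₂ ∈ u +ᵥ lam • K1) :
    1 ≤ lam := by
  obtain ⟨_, ⟨x, hx, rfl⟩, hux⟩ := hc₁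
  obtain ⟨_, ⟨y, hy, rfl⟩, huy⟩ := hc₂
  have he : ∀ i, |e₁ i| = 1 := fun i ↦ by rcases he₁ i with h | h <;> simp [h]
  have hsq : ∀ i, e₁ i * e₁ i = 1 := fun i ↦ by rcases he₁ i with h | h <;> simp [h]
  have hdiff : ∀ i, lam * (e₁ i * x i) - lam * (e₁ i * y i) = 2 / 3 := by
    intro i
    have h₁ : u i + lam * x i = e₁ i / 3 := by
      simpa [K1FacetCentre_apply] using congrFun hux i
    have h₂ : u i + lam * y i = -e₁ i / 3 := by
      simpa [K1FacetCentre_apply, eq_neg_of_disjoint_K1Facet he₁ he₂ hint i]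
        using congrFun huy i
    linear_combination e₁ i * h₁ - e₁ i * h₂ + 2 / 3 * hsq i
  have hsum : lam * (∑ i, e₁ i * x i - ∑ i, e₁ i * y i) = 2 := by
    simp only [Fin.sum_univ_three]
    linear_combination hdiff 0 + hdiff 1 + hdiff 2
  have hxle := (abs_le.mp (abs_sum_mul_le_one_of_mem_K1 he hx)).2
  have hyge := (abs_le.mp (abs_sum_mul_le_one_of_mem_K1 he hy)).1
  nlinarith
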